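/- Let n, k be positive integers with 1 ≤ k ≤ n−1, let α ≥ 1 be a real number, and let G be a connected finite simple graph on n vertices with edge connectivity at most k (i.e., there is a set of at most k edges whose deletion disconnects G). Then S_α(G) ≤ b_α(n,k), where b_α(n,k) = k(n−2)^α + (n−k−2)(n−3)^α + [n−2+k/2 + (1/2)·√((k−2n)² + 16(k−n+1))]^α + [n−2+k/2 − (1/2)·√((k−2n)² + 16(k−n+1))]^α, with equality if and only if G is isomorphic to K_k ∨ (K_1 ∪ K_{n−k−1}). -/

import Mathlib

/-! The proof compares `G` with the graphs `blk c` of the form `K_k ∨ (K_i ∪ K_m)`.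

* An edge cut of size at most `k ≤ n - 2` leaves two nonadjacent vertices on different sides; one
  endpoint of each cut edge, chosen away from these two, gives a vertex cut. Hence `G ≤ blk c`
  for some colouring with `k` vertices of colour `0` and `i, m ≥ 1` of colours `1, 2`
  (`exists_blk`). When `k = n - 1` one compares with the complete graph instead.
* `S α` is strictly monotone under adding edges (`S_mono`): in an eigenbasis of `Q(G)` the diagonal
  of `Q(H)` dominates the spectrum of `Q(G)`, and Jensen's inequality for `x ^ α` compares this
  diagonal with the spectrum of `Q(H)`; equality forces equal traces.
* `Q(blk c)` is a diagonal matrix plus one of rank at most three, so the matrix determinant lemma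
  gives its spectrum (`sum_blk`): `n - 2` (`k` times), `n - 2 - m` (`i - 1` times), `n - 2 - i`
  (`m - 1` times) and `n - 2 + k / 2 ± √((k - 2 n) ^ 2 - 16 i m) / 2`.
* Since `i m ≥ i + m - 1`, the last two eigenvalues, whose sum does not depend on `i`, are furthest
  apart for `i = 1` or `m = 1`, and the remaining ones are at most `n - 3`, strictly so for some
  if `i, m ≥ 2` (`S_blk_le_b`).
-/


open Matrix Finset

noncomputable section

namespace SLP

variable {V : Type*} [Fintype V] [DecidableEq V]

/-- The signless Laplacian matrix `Q(G) = D(G) + A(G)` of a finite simple graph. -/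
def Q (G : SimpleGraph V) : Matrix V V ℝ :=
  letI : DecidableRel G.Adj := Classical.decRel _
  G.degMatrix ℝ + G.adjMatrix ℝ

lemma Q_isHermitian (G : SimpleGraph V) : (Q G).IsHermitian := by
  letI : DecidableRel G.Adj := Classical.decRel _
  have h : Q G = G.degMatrix ℝ + G.adjMatrix ℝ := rfl
  rw [h, Matrix.IsHermitian]
  ext i j
  simp [Matrix.conjTranspose_apply, SimpleGraph.degMatrix, Matrix.diagonal,
    SimpleGraph.adjMatrix_apply, SimpleGraph.adj_comm]
  rcases eq_or_ne i j with rfl | hij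
  · simp
  · simp [hij, Ne.symm hij]

/-- The (unordered) signless Laplacian eigenvalues of `G`, listed with multiplicity
(indexed by the vertices). -/
def eigs (G : SimpleGraph V) : V → ℝ := (Q_isHermitian G).eigenvalues

/-- `S α G`: the sum of the α-th (real) powers of the nonzero signless Laplacian
eigenvalues of `G`. -/
def S (α : ℝ) (G : SimpleGraph V) : ℝ :=
  ∑ v ∈ Finset.univ.filter (fun v => eigs G v ≠ 0), eigs G v ^ α

/-- The join `G ∨ H` of two graphs: the disjoint union together with all edges
joining a vertex of `G` to a vertex of `H`. -/
def join {α β : Type*} (G : SimpleGraph α) (H : SimpleGraph β) : SimpleGraph (α ⊕ β) :=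
  (Gᶜ ⊕g Hᶜ)ᶜ

/-- The graph `G(i) = K_k ∨ (K_i ∪ K_{n-k-i})`. -/
def Gik (n k i : ℕ) : SimpleGraph (Fin k ⊕ (Fin i ⊕ Fin (n - k - i))) :=
  join (⊤ : SimpleGraph (Fin k))
    ((⊤ : SimpleGraph (Fin i)) ⊕g (⊤ : SimpleGraph (Fin (n - k - i))))

/-- `G` has edge connectivity at most `k`: there is a set of at most `k` edges whose
deletion leaves a disconnected graph. -/
def EdgeConnAtMost (G : SimpleGraph V) (k : ℕ) : Prop :=
  ∃ F : Finset (Sym2 V), (↑F : Set (Sym2 V)) ⊆ G.edgeSet ∧ F.card ≤ k ∧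
    ¬ (G.deleteEdges (↑F : Set (Sym2 V))).Connected

/-- The bound `b_α(n,k)`. -/
def b (α : ℝ) (n k : ℕ) : ℝ :=
  k * ((n : ℝ) - 2) ^ α + ((n : ℝ) - k - 2) * ((n : ℝ) - 3) ^ α
    + ((n : ℝ) - 2 + k / 2
        + (1 / 2) * Real.sqrt (((k : ℝ) - 2 * n) ^ 2 + 16 * ((k : ℝ) - n + 1))) ^ α
    + ((n : ℝ) - 2 + k / 2
        - (1 / 2) * Real.sqrt (((k : ℝ) - 2 * n) ^ 2 + 16 * ((k : ℝ) - n + 1))) ^ α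

set_option linter.unusedSectionVars false

/-! ### The block graphs and their spectrum -/

/-- Two block colours are compatible unless they are `1` and `2` in some order. -/
def compat (a b : Fin 3) : Prop := ¬(a = 1 ∧ b = 2) ∧ ¬(a = 2 ∧ b = 1)

instance (a b : Fin 3) : Decidable (compat a b) := by unfold compat; infer_instance

/-- The graph obtained from a colouring `c` of the vertices by `0, 1, 2`: all edges except those
joining colour `1` to colour `2`.  It is `K_k ∨ (K_i ∪ K_m)`, realised on the given vertex set,
where `k, i, m` are the sizes of the colour classes. -/
def blk (c : V → Fin 3) : SimpleGraph V where
  Adj u v := u ≠ v ∧ compat (c u) (c v)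
  symm := ⟨fun u v h => ⟨h.1.symm, by
    have := h.2; unfold compat at *; tauto⟩⟩
  loopless := ⟨fun u h => h.1 rfl⟩

/-- The size of the colour class `a`. -/
def cnt (c : V → Fin 3) (a : Fin 3) : ℕ := (univ.filter (fun v => c v = a)).card

lemma cnt_sum (c : V → Fin 3) : cnt c 0 + cnt c 1 + cnt c 2 = Fintype.card V := by
  have h := Finset.card_eq_sum_card_fiberwise (s := (univ : Finset V)) (t := (univ : Finset (Fin 3)))
    (f := c) (by simp)
  rw [Fin.sum_univ_three] at h
  exact h.symm

open Classical in
lemma Q_apply (G : SimpleGraph V) (u v : V) :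
    Q G u v = (if u = v then ∑ w, (if G.Adj u w then (1 : ℝ) else 0) else 0)
      + (if G.Adj u v then 1 else 0) := by
  unfold Q
  simp only [Matrix.add_apply, SimpleGraph.degMatrix, Matrix.diagonal_apply,
    SimpleGraph.adjMatrix_apply]
  congr 1
  split_ifs
  · simp [← SimpleGraph.card_neighborFinset_eq_degree, SimpleGraph.neighborFinset_eq_filter]
  · rfl

/-- The incidence matrix of vertices against colours. -/
def inc (c : V → Fin 3) : Matrix V (Fin 3) ℝ := fun v a => if c v = a then 1 else 0

/-- The `0`-`1` matrix of the compatibility relation on colours. -/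
def cm : Matrix (Fin 3) (Fin 3) ℝ := !![1, 1, 1; 1, 1, 0; 1, 0, 1]

/-- The three diagonal values of `Q(blk c) - inc c * cm * (inc c)ᵀ`. -/
def dg (c : V → Fin 3) (a : Fin 3) : ℝ :=
  ![(Fintype.card V : ℝ) - 2, (Fintype.card V : ℝ) - 2 - cnt c 2,
    (Fintype.card V : ℝ) - 2 - cnt c 1] a

lemma inc_cm_inc (c : V → Fin 3) (u v : V) :
    (inc c * (cm * (inc c)ᵀ)) u v = cm (c u) (c v) := by
  simp [Matrix.mul_apply, inc]

lemma cm_eq (a b : Fin 3) : cm a b = if compat a b then 1 else 0 := by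
  fin_cases a <;> fin_cases b <;> simp [cm, compat]

lemma sum_compat (c : V → Fin 3) (a : Fin 3) :
    ∑ w, cm a (c w) = dg c a + 2 := by
  have h : ∀ w, cm a (c w) = ∑ b, cm a b * (if c w = b then 1 else 0) := by
    intro w; simp
  simp_rw [h]
  rw [Finset.sum_comm]
  simp_rw [← Finset.mul_sum]
  have hc : ∀ b, ∑ w, (if c w = b then (1:ℝ) else 0) = cnt c b := by
    intro b; simp [cnt]
  simp_rw [hc]
  have := cnt_sum c
  have h2 : (cnt c 0 : ℝ) + cnt c 1 + cnt c 2 = Fintype.card V := by exact_mod_cast this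
  rw [Fin.sum_univ_three]
  fin_cases a <;> simp [cm, dg, ← h2] <;> ring

/-- `Q(blk c)` is a diagonal matrix depending on the colour only, plus a matrix of rank at most
`3`. -/
lemma Q_blk (c : V → Fin 3) :
    Q (blk c) = Matrix.diagonal (fun v => dg c (c v)) + inc c * (cm * (inc c)ᵀ) := by
  classical
  ext u v
  rw [Q_apply, Matrix.add_apply, inc_cm_inc, Matrix.diagonal_apply]
  have hadj : ∀ u w, (if (blk c).Adj u w then (1:ℝ) else 0)
      = cm (c u) (c w) - if u = w then 1 else 0 := by
    intro u w
    rw [cm_eq]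
    by_cases h : u = w
    · subst h
      have : compat (c u) (c u) := by
        unfold compat; constructor <;> rintro ⟨h1, h2⟩ <;> simp [h1] at h2
      simp [this]
    · simp [blk, h]
  simp_rw [hadj]
  rw [Finset.sum_sub_distrib, sum_compat]
  by_cases h : u = v
  · subst h; simp; ring
  · simp [h]

lemma prod_col (c : V → Fin 3) (g : Fin 3 → ℝ) :
    ∏ v, g (c v) = g 0 ^ cnt c 0 * g 1 ^ cnt c 1 * g 2 ^ cnt c 2 := by
  rw [← Finset.prod_fiberwise univ c, Fin.prod_univ_three]
  have : ∀ a, ∏ v with c v = a, g (c v) = g a ^ cnt c a := by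
    intro a
    rw [cnt, ← Finset.prod_const]
    apply Finset.prod_congr rfl
    intro v hv; simp at hv; rw [hv]
  simp_rw [this]

/-- The characteristic polynomial of `Q(blk c)` away from the three diagonal values, by the
matrix determinant lemma, which reduces it to a `3 × 3` determinant. -/
lemma det_blk (c : V → Fin 3) (t : ℝ) (ht : ∀ a, t - dg c a ≠ 0) :
    (Matrix.scalar V t - Q (blk c)).det * ((t - dg c 1) * (t - dg c 2)) =
      (t - dg c 0) ^ cnt c 0 * (t - dg c 1) ^ cnt c 1 * (t - dg c 2) ^ cnt c 2 *
      (t ^ 2 - (2 * (Fintype.card V : ℝ) - 4 + cnt c 0) * t +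
        (((Fintype.card V : ℝ) - 2 + cnt c 0 / 2) ^ 2 -
          ((cnt c 0 - 2 * (Fintype.card V : ℝ)) ^ 2 - 16 * cnt c 1 * cnt c 2) / 4)) := by
  have hE : (inc c)ᵀ * (inc c) = Matrix.diagonal (fun a => (cnt c a : ℝ)) := by
    ext a b
    simp only [Matrix.mul_apply, Matrix.transpose_apply, inc, Matrix.diagonal_apply, cnt]
    by_cases h : a = b
    · subst h
      rw [if_pos rfl, Finset.card_filter]
      push_cast
      refine Finset.sum_congr rfl fun v _ => ?_
      split_ifs <;> simp
    · simp only [h, if_false]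
      apply Finset.sum_eq_zero
      intro v _
      by_cases h1 : c v = a
      · simp [h1, h]
      · simp [h1]
  have key : Matrix.scalar V t - Q (blk c) =
      Matrix.diagonal (fun v => t - dg c (c v)) *
        (1 - (inc c * Matrix.diagonal (fun a => (t - dg c a)⁻¹)) * (cm * (inc c)ᵀ)) := by
    have h1 : Matrix.diagonal (fun v => t - dg c (c v)) *
        (inc c * Matrix.diagonal (fun a => (t - dg c a)⁻¹)) = inc c := by
      ext v a
      rw [Matrix.diagonal_mul, Matrix.mul_diagonal]
      by_cases h : c v = a
      · subst h; simp [inc, ht]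
      · simp [inc, h]
    rw [Matrix.mul_sub, ← Matrix.mul_assoc, h1, Matrix.mul_one, Q_blk, ← sub_sub]
    congr 1
    ext u v
    simp only [Matrix.scalar_apply, Matrix.sub_apply, Matrix.diagonal_apply]
    split_ifs <;> simp
  rw [key, Matrix.det_mul, Matrix.det_one_sub_mul_comm, Matrix.det_diagonal,
    prod_col c (fun a => t - dg c a)]
  have h2 : cm * (inc c)ᵀ * (inc c * Matrix.diagonal (fun a => (t - dg c a)⁻¹)) =
      cm * Matrix.diagonal (fun a => (cnt c a : ℝ) * (t - dg c a)⁻¹) := by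
    rw [← Matrix.mul_assoc, Matrix.mul_assoc cm, hE, Matrix.mul_assoc, Matrix.diagonal_mul_diagonal]
  rw [h2]
  have hn : (cnt c 0 : ℝ) + cnt c 1 + cnt c 2 = Fintype.card V := by exact_mod_cast cnt_sum c
  rw [Matrix.det_fin_three]
  simp only [Matrix.sub_apply, Matrix.mul_diagonal, cm, Matrix.one_apply]
  have e0 := ht 0
  have e1 := ht 1
  have e2 := ht 2
  simp only [mul_assoc]
  congr 1
  congr 1
  congr 1
  simp [dg, ← hn] at e0 e1 e2 ⊢
  field_simp
  ring

open Polynomial in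
/-- The spectrum of `Q(blk c)`, tested against an arbitrary function `f`.  Adding the two terms
on the left keeps the statement valid when a colour class is empty. -/
lemma sum_blk (c : V → Fin 3) (f : ℝ → ℝ) (r : ℝ)
    (hr : r ^ 2 = (cnt c 0 - 2 * (Fintype.card V : ℝ)) ^ 2 - 16 * cnt c 1 * cnt c 2) :
    ∑ v, f (eigs (blk c) v) + f (dg c 1) + f (dg c 2) =
      cnt c 0 * f (dg c 0) + cnt c 1 * f (dg c 1) + cnt c 2 * f (dg c 2) +
      f ((Fintype.card V : ℝ) - 2 + cnt c 0 / 2 + 1 / 2 * r) +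
      f ((Fintype.card V : ℝ) - 2 + cnt c 0 / 2 - 1 / 2 * r) := by
  set y₁ := (Fintype.card V : ℝ) - 2 + cnt c 0 / 2 + 1 / 2 * r with hy1
  set y₂ := (Fintype.card V : ℝ) - 2 + cnt c 0 / 2 - 1 / 2 * r with hy2
  have hp : (Q (blk c)).charpoly * ((X - C (dg c 1)) * (X - C (dg c 2))) =
      (X - C (dg c 0)) ^ cnt c 0 * (X - C (dg c 1)) ^ cnt c 1 * (X - C (dg c 2)) ^ cnt c 2 *
      ((X - C y₁) * (X - C y₂)) := by
    apply Polynomial.eq_of_infinite_eval_eq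
    have hfin : (Set.range (dg c)).Finite := Set.finite_range _
    apply hfin.infinite_compl.mono
    intro t ht
    have ht' : ∀ a, t - dg c a ≠ 0 := fun a h => ht ⟨a, by linarith⟩
    have := det_blk c t ht'
    simp only [Set.mem_ofPred_eq, eval_mul, eval_pow, eval_sub, eval_X, eval_C,
      Matrix.eval_charpoly]
    rw [this]
    congr 1
    rw [hy1, hy2]
    linear_combination (-1/4) * (- hr)
  have hq : (Q (blk c)).charpoly = ((univ.val.map (eigs (blk c))).map (fun a => X - C a)).prod := by
    rw [(Q_isHermitian (blk c)).charpoly_eq]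
    simp [eigs]
  have hm : univ.val.map (eigs (blk c)) + {dg c 1} + {dg c 2} =
      Multiset.replicate (cnt c 0) (dg c 0) + Multiset.replicate (cnt c 1) (dg c 1) +
      Multiset.replicate (cnt c 2) (dg c 2) + {y₁} + {y₂} := by
    refine (Polynomial.roots_multiset_prod_X_sub_C _).symm.trans
      (Eq.trans ?_ (Polynomial.roots_multiset_prod_X_sub_C _))
    congr 1
    rw [hq] at hp
    simp only [Multiset.map_add, Multiset.prod_add, Multiset.map_singleton,
      Multiset.prod_singleton, Multiset.map_replicate, Multiset.prod_replicate]
    rw [mul_assoc, hp, mul_assoc _ (X - C y₁)]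
  have := congrArg (fun s => (Multiset.map f s).sum) hm
  simp only [Multiset.map_add, Multiset.sum_add, Multiset.map_singleton,
      Multiset.sum_singleton, Multiset.map_replicate, Multiset.sum_replicate, Multiset.map_map,
      nsmul_eq_mul] at this
  exact this

lemma S_eq (α : ℝ) (hα : 1 ≤ α) (G : SimpleGraph V) : S α G = ∑ v, eigs G v ^ α := by
  unfold S
  apply Finset.sum_subset (Finset.filter_subset _ _)
  intro v _ hv
  simp only [mem_filter, mem_univ, true_and, not_not] at hv
  rw [hv, Real.zero_rpow (by linarith)]

/-! ### Monotonicity in the graph -/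

open Classical in
lemma quad_eq (G : SimpleGraph V) (x : V → ℝ) :
    x ⬝ᵥ (Q G *ᵥ x) = (1 / 2) * ∑ u, ∑ v, if G.Adj u v then (x u + x v) ^ 2 else 0 := by
  have h1 : x ⬝ᵥ (Q G *ᵥ x) = ∑ u, ∑ v, if G.Adj u v then x u * (x u + x v) else 0 := by
    simp only [dotProduct, Matrix.mulVec, Q_apply, add_mul, Finset.sum_add_distrib, ite_mul,
      zero_mul, Finset.sum_ite_eq, mem_univ, if_true, mul_add]
    simp only [← Finset.sum_add_distrib, Finset.mul_sum, Finset.sum_mul]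
    refine Finset.sum_congr rfl fun u _ => Finset.sum_congr rfl fun v _ => ?_
    split_ifs <;> ring
  have h2 : ∑ u, ∑ v, (if G.Adj u v then x u * (x u + x v) else 0) =
      ∑ u, ∑ v, (if G.Adj u v then x v * (x u + x v) else 0) := by
    rw [Finset.sum_comm]
    refine Finset.sum_congr rfl fun u _ => Finset.sum_congr rfl fun v _ => ?_
    simp only [G.adj_comm v u, add_comm (x v)]
  have h3 : ∑ u, ∑ v, (if G.Adj u v then (x u + x v) ^ 2 else 0) =
      ∑ u, ∑ v, (if G.Adj u v then x u * (x u + x v) else 0) +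
      ∑ u, ∑ v, (if G.Adj u v then x v * (x u + x v) else 0) := by
    simp only [← Finset.sum_add_distrib]
    refine Finset.sum_congr rfl fun u _ => Finset.sum_congr rfl fun v _ => ?_
    split_ifs <;> ring
  rw [h3, ← h2, h1]; ring

lemma quad_mono {G H : SimpleGraph V} (h : G ≤ H) (x : V → ℝ) :
    x ⬝ᵥ (Q G *ᵥ x) ≤ x ⬝ᵥ (Q H *ᵥ x) := by
  classical
  rw [quad_eq, quad_eq]
  gcongr with u _ v _
  by_cases hg : G.Adj u v
  · simp [hg, h hg]
  · simp only [hg, if_false]; split_ifs <;> positivity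

lemma quad_nonneg (G : SimpleGraph V) (x : V → ℝ) : 0 ≤ x ⬝ᵥ (Q G *ᵥ x) := by
  classical
  rw [quad_eq]
  have : ∀ u v, 0 ≤ (if G.Adj u v then (x u + x v) ^ 2 else 0) := by
    intro u v; split_ifs <;> positivity
  have := Finset.sum_nonneg fun u (_ : u ∈ univ) => Finset.sum_nonneg fun v (_ : v ∈ univ) => this u v
  linarith

lemma trace_Q_eq {G H : SimpleGraph V} (h : G ≤ H) (ht : (Q G).trace = (Q H).trace) : G = H := by
  classical
  simp only [Matrix.trace, Matrix.diag, Q_apply, if_true, SimpleGraph.irrefl, if_false,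
    add_zero] at ht
  have hle : ∀ u v, (if G.Adj u v then (1:ℝ) else 0) ≤ (if H.Adj u v then (1:ℝ) else 0) := by
    intro u v
    by_cases hg : G.Adj u v
    · simp [hg, h hg]
    · simp only [hg, if_false]; split_ifs <;> norm_num
  rw [Finset.sum_eq_sum_iff_of_le (fun u _ => Finset.sum_le_sum fun v _ => hle u v)] at ht
  refine le_antisymm h fun u v huv => ?_
  have h1 := ht u (mem_univ _)
  rw [Finset.sum_eq_sum_iff_of_le (fun v _ => hle u v)] at h1
  have h2 := h1 v (mem_univ _)
  by_contra hg
  simp [hg, huv] at h2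

/-- Real form of the spectral theorem. -/
lemma exists_diag (G : SimpleGraph V) : ∃ U : Matrix V V ℝ, Uᵀ * U = 1 ∧ U * Uᵀ = 1 ∧
    Q G = U * Matrix.diagonal (eigs G) * Uᵀ := by
  have h := (Q_isHermitian G).spectral_theorem
  refine ⟨(Q_isHermitian G).eigenvectorUnitary, ?_, ?_, ?_⟩
  · have := Unitary.coe_star_mul_self (Q_isHermitian G).eigenvectorUnitary
    simpa [Matrix.star_eq_conjTranspose, Matrix.conjTranspose_eq_transpose_of_trivial] using this
  · have := Unitary.coe_mul_star_self (Q_isHermitian G).eigenvectorUnitary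
    simpa [Matrix.star_eq_conjTranspose, Matrix.conjTranspose_eq_transpose_of_trivial] using this
  · conv_lhs => rw [h]
    rw [Unitary.conjStarAlgAut_apply]
    simp [Matrix.star_eq_conjTranspose, Matrix.conjTranspose_eq_transpose_of_trivial, eigs]

lemma congr_apply (M U : Matrix V V ℝ) (i : V) :
    (Uᵀ * M * U) i i = (fun u => U u i) ⬝ᵥ (M *ᵥ (fun u => U u i)) := by
  rw [Matrix.mul_assoc, Matrix.mul_apply]
  rfl

lemma eigs_nonneg (G : SimpleGraph V) (v : V) : 0 ≤ eigs G v := by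
  obtain ⟨U, h1, h2, h3⟩ := exists_diag G
  have : Uᵀ * Q G * U = Matrix.diagonal (eigs G) := by
    rw [h3]
    calc Uᵀ * (U * Matrix.diagonal (eigs G) * Uᵀ) * U
        = (Uᵀ * U) * Matrix.diagonal (eigs G) * (Uᵀ * U) := by simp only [Matrix.mul_assoc]
      _ = _ := by simp [h1]
  have h4 := congr_apply (Q G) U v
  rw [this, Matrix.diagonal_apply_eq] at h4
  rw [h4]
  exact quad_nonneg _ _

/-- Monotonicity of `S α` under adding edges, with strictness.  The diagonal entries of `Q(H)` in
an eigenbasis of `Q(G)` dominate the eigenvalues of `Q(G)`, and they are averages of the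
eigenvalues of `Q(H)` with doubly stochastic weights, so Jensen's inequality applies. -/
lemma S_mono (α : ℝ) (hα : 1 ≤ α) {G H : SimpleGraph V} (h : G ≤ H) :
    S α G ≤ S α H ∧ (S α G = S α H → G = H) := by
  obtain ⟨U, hU1, hU2, hU3⟩ := exists_diag G
  obtain ⟨W, hW1, hW2, hW3⟩ := exists_diag H
  set bb : V → ℝ := fun i => (Uᵀ * Q H * U) i i with hbb
  have hA : Uᵀ * Q G * U = Matrix.diagonal (eigs G) := by
    rw [hU3]
    calc Uᵀ * (U * Matrix.diagonal (eigs G) * Uᵀ) * U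
        = (Uᵀ * U) * Matrix.diagonal (eigs G) * (Uᵀ * U) := by simp only [Matrix.mul_assoc]
      _ = _ := by simp [hU1]
  have hab : ∀ i, eigs G i ≤ bb i := by
    intro i
    have h4 := congr_apply (Q G) U i
    rw [hA, Matrix.diagonal_apply_eq] at h4
    rw [h4, hbb]
    simp only
    rw [congr_apply]
    exact quad_mono h _
  set P := Uᵀ * W with hP
  have hP1 : P * Pᵀ = 1 := by
    rw [hP, Matrix.transpose_mul, Matrix.transpose_transpose]
    calc Uᵀ * W * (Wᵀ * U) = Uᵀ * (W * Wᵀ) * U := by simp only [Matrix.mul_assoc]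
      _ = 1 := by simp [hW2, hU1]
  have hP2 : Pᵀ * P = 1 := by
    rw [hP, Matrix.transpose_mul, Matrix.transpose_transpose]
    calc Wᵀ * U * (Uᵀ * W) = Wᵀ * (U * Uᵀ) * W := by simp only [Matrix.mul_assoc]
      _ = 1 := by simp [hU2, hW1]
  have hb : ∀ i, bb i = ∑ j, P i j ^ 2 * eigs H j := by
    intro i
    have : Uᵀ * Q H * U = P * Matrix.diagonal (eigs H) * Pᵀ := by
      rw [hW3, hP, Matrix.transpose_mul, Matrix.transpose_transpose]
      simp only [Matrix.mul_assoc]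
    rw [hbb]; simp only
    rw [this, Matrix.mul_apply]
    refine Finset.sum_congr rfl fun j _ => ?_
    rw [Matrix.mul_diagonal, Matrix.transpose_apply]; ring
  have hr : ∀ i, ∑ j, P i j ^ 2 = 1 := by
    intro i
    have := congrFun (congrFun hP1 i) i
    rw [Matrix.mul_apply, Matrix.one_apply_eq] at this
    rw [← this]
    exact Finset.sum_congr rfl fun j _ => by rw [Matrix.transpose_apply]; ring
  have hc : ∀ j, ∑ i, P i j ^ 2 = 1 := by
    intro j
    have := congrFun (congrFun hP2 j) j
    rw [Matrix.mul_apply, Matrix.one_apply_eq] at this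
    rw [← this]
    exact Finset.sum_congr rfl fun j _ => by rw [Matrix.transpose_apply]; ring
  have hjen : ∑ i, bb i ^ α ≤ ∑ j, eigs H j ^ α := by
    calc ∑ i, bb i ^ α ≤ ∑ i, ∑ j, P i j ^ 2 * eigs H j ^ α := by
          refine Finset.sum_le_sum fun i _ => ?_
          rw [hb]
          have := (convexOn_rpow hα).map_sum_le (t := univ) (w := fun j => P i j ^ 2)
            (p := eigs H) (fun j _ => sq_nonneg _) (hr i) (fun j _ => eigs_nonneg H j)
          simpa using this
      _ = ∑ j, eigs H j ^ α := by
          rw [Finset.sum_comm]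
          simp_rw [← Finset.sum_mul, hc, one_mul]
  have hmono : ∀ i, eigs G i ^ α ≤ bb i ^ α := fun i =>
    Real.rpow_le_rpow (eigs_nonneg G i) (hab i) (by linarith)
  have hs := Finset.sum_le_sum fun i (_ : i ∈ univ) => hmono i
  rw [S_eq α hα, S_eq α hα]
  refine ⟨hs.trans hjen, fun heq => trace_Q_eq h ?_⟩
  have heq' : ∑ i, eigs G i ^ α = ∑ i, bb i ^ α := le_antisymm hs (heq ▸ hjen)
  rw [Finset.sum_eq_sum_iff_of_le (fun i _ => hmono i)] at heq'
  have hab' : ∀ i, eigs G i = bb i := fun i =>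
    (Real.strictMonoOn_rpow_Ici_of_exponent_pos (by linarith : 0 < α)).injOn
      (eigs_nonneg G i) ((eigs_nonneg G i).trans (hab i)) (heq' i (mem_univ _))
  have htr : ∀ M : Matrix V V ℝ, (Uᵀ * M * U).trace = M.trace := by
    intro M
    rw [Matrix.trace_mul_comm, ← Matrix.mul_assoc, hU2, Matrix.one_mul]
  rw [← htr (Q G), ← htr (Q H), hA, Matrix.trace_diagonal]
  simp_rw [hab']
  rfl

/-! ### Comparing the block graphs -/

/-- By convexity, `x ^ α + y ^ α` with `x + y` fixed increases with the distance of `x` and `y`. -/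
lemma spread {α c s s' : ℝ} (hα : 1 ≤ α) (h0 : 0 ≤ s') (h1 : s' ≤ s) (h2 : s ≤ c) :
    (c + s') ^ α + (c - s') ^ α ≤ (c + s) ^ α + (c - s) ^ α := by
  rcases eq_or_lt_of_le (h0.trans h1) with h | h
  · have : s' = s := by linarith
    rw [this]
  · have hc := (convexOn_rpow hα).2 (x := c + s) (y := c - s) (Set.mem_Ici.2 (by linarith))
      (Set.mem_Ici.2 (by linarith))
    have hp : 0 ≤ (s + s') / (2 * s) := by positivity
    have hm : 0 ≤ (s - s') / (2 * s) := div_nonneg (by linarith) (by linarith)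
    have e : (s + s') / (2 * s) + (s - s') / (2 * s) = 1 := by field_simp; ring
    have a1 := hc hp hm e
    have a2 := hc hm hp (by linarith)
    simp only [smul_eq_mul] at a1 a2
    have e1 : (s + s') / (2 * s) * (c + s) + (s - s') / (2 * s) * (c - s) = c + s' := by
      field_simp; ring
    have e2 : (s - s') / (2 * s) * (c + s) + (s + s') / (2 * s) * (c - s) = c - s' := by
      field_simp; ring
    rw [e1] at a1
    rw [e2] at a2
    have e3 : (s - s') / (2 * s) = 1 - (s + s') / (2 * s) := by linarith
    rw [e3] at a1 a2
    linarith

lemma disc_nonneg {k m n : ℝ} (hk : 1 ≤ k) (hm : 0 ≤ m) (hn : k + 1 + m = n) :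
    0 ≤ (k - 2 * n) ^ 2 + 16 * (k - n + 1) := by
  subst hn
  nlinarith [sq_nonneg (2 * m - 1), mul_nonneg hm (sub_nonneg.2 hk)]

lemma S_blk_eq_b (c : V → Fin 3) (α : ℝ) (hα : 1 ≤ α) (hk : 1 ≤ cnt c 0) (h1 : cnt c 1 = 1) :
    S α (blk c) = b α (Fintype.card V) (cnt c 0) := by
  have hn : (cnt c 0 : ℝ) + cnt c 1 + cnt c 2 = Fintype.card V := by exact_mod_cast cnt_sum c
  have hk' : (1 : ℝ) ≤ cnt c 0 := by exact_mod_cast hk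
  have h1' : (cnt c 1 : ℝ) = 1 := by exact_mod_cast h1
  have hm : (0 : ℝ) ≤ cnt c 2 := Nat.cast_nonneg _
  have hd := disc_nonneg hk' hm (n := (Fintype.card V : ℝ)) (by rw [← hn, h1'])
  have := sum_blk c (fun x => x ^ α)
    (Real.sqrt (((cnt c 0 : ℝ) - 2 * Fintype.card V) ^ 2
      + 16 * ((cnt c 0 : ℝ) - Fintype.card V + 1)))
    (by rw [Real.sq_sqrt hd, h1', ← hn, h1']; ring)
  rw [S_eq α hα]
  unfold b
  simp only [h1', one_mul, dg, Matrix.cons_val] at this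
  have e1 : (Fintype.card V : ℝ) - 2 - 1 = Fintype.card V - 3 := by ring
  have e2 : (cnt c 2 : ℝ) = Fintype.card V - cnt c 0 - 1 := by linarith
  rw [e1] at this
  have e3 : ((Fintype.card V : ℝ) - cnt c 0 - 2) * ((Fintype.card V : ℝ) - 3) ^ α
    = cnt c 2 * ((Fintype.card V : ℝ) - 3) ^ α - ((Fintype.card V : ℝ) - 3) ^ α := by
    rw [e2]; ring
  rw [e3]
  linarith

lemma S_blk_le_b (c : V → Fin 3) (α : ℝ) (hα : 1 ≤ α) (hk : 1 ≤ cnt c 0) (h1 : 1 ≤ cnt c 1)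
    (h2 : 1 ≤ cnt c 2) :
    S α (blk c) ≤ b α (Fintype.card V) (cnt c 0) ∧
    (S α (blk c) = b α (Fintype.card V) (cnt c 0) → cnt c 1 = 1 ∨ cnt c 2 = 1) := by
  have hn : (cnt c 0 : ℝ) + cnt c 1 + cnt c 2 = Fintype.card V := by exact_mod_cast cnt_sum c
  have hk' : (1 : ℝ) ≤ cnt c 0 := by exact_mod_cast hk
  have h1' : (1 : ℝ) ≤ cnt c 1 := by exact_mod_cast h1
  have h2' : (1 : ℝ) ≤ cnt c 2 := by exact_mod_cast h2
  have hS := S_eq α hα (blk c)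
  have hor : (cnt c 1 = 1 ∨ cnt c 2 = 1) ∨ (2 ≤ cnt c 1 ∧ 2 ≤ cnt c 2) := by omega
  have hor' : (cnt c 1 = 1 ∨ cnt c 2 = 1) ∨ ((2:ℝ) ≤ cnt c 1 ∧ (2:ℝ) ≤ cnt c 2) :=
    hor.imp_right fun h => ⟨by exact_mod_cast h.1, by exact_mod_cast h.2⟩
  have hsp := sum_blk c (fun x => x ^ α)
  unfold b
  generalize S α (blk c) = T at *
  simp only [dg, Matrix.cons_val] at hsp
  rw [← hS] at hsp
  generalize (cnt c 1 = 1 ∨ cnt c 2 = 1) = R at *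
  generalize (cnt c 0 : ℝ) = k at *
  generalize (cnt c 1 : ℝ) = i at *
  generalize (cnt c 2 : ℝ) = m at *
  generalize (Fintype.card V : ℝ) = n at *
  subst hn
  set n := k + i + m with hn
  have hle : (k - 2 * n) ^ 2 - 16 * i * m ≤ (k - 2 * n) ^ 2 + 16 * (k - n + 1) := by
    nlinarith [mul_nonneg (sub_nonneg.2 h1') (sub_nonneg.2 h2')]
  have hd : 0 ≤ (k - 2 * n) ^ 2 - 16 * i * m := by
    rw [hn]
    nlinarith [sq_nonneg (i - m), mul_nonneg (by linarith : 0 ≤ k) (by linarith : 0 ≤ i),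
      mul_nonneg (by linarith : 0 ≤ k) (by linarith : 0 ≤ m), sq_nonneg k]
  have hs := hsp (Real.sqrt ((k - 2 * n) ^ 2 - 16 * i * m)) (Real.sq_sqrt hd)
  have hroot : Real.sqrt ((k - 2 * n) ^ 2 + 16 * (k - n + 1)) ≤ 2 * (n - 2 + k / 2) := by
    apply Real.sqrt_le_iff.2
    refine ⟨by linarith, ?_⟩
    -- the difference of the two sides is `8 * k * (n - 3)`
    nlinarith [mul_nonneg (by linarith : 0 ≤ k) (by linarith : 0 ≤ n - 3)]
  have hspread := spread hα (c := n - 2 + k / 2)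
    (s' := 1 / 2 * Real.sqrt ((k - 2 * n) ^ 2 - 16 * i * m))
    (s := 1 / 2 * Real.sqrt ((k - 2 * n) ^ 2 + 16 * (k - n + 1)))
    (by positivity) (by gcongr) (by linarith)
  have hx : (n - 2 - m) ^ α ≤ (n - 3) ^ α :=
    Real.rpow_le_rpow (by linarith) (by linarith) (by linarith)
  have hy : (n - 2 - i) ^ α ≤ (n - 3) ^ α :=
    Real.rpow_le_rpow (by linarith) (by linarith) (by linarith)
  have hx1 := mul_le_mul_of_nonneg_left hx (sub_nonneg.2 h1')
  have hy1 := mul_le_mul_of_nonneg_left hy (sub_nonneg.2 h2')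
  have he : (n - k - 2) * (n - 3) ^ α = (i - 1) * (n - 3) ^ α + (m - 1) * (n - 3) ^ α := by
    rw [hn]; ring
  rw [he]
  refine ⟨by linarith, fun heq => ?_⟩
  rcases hor' with h | ⟨hi, hm⟩
  · exact h
  · exfalso
    have hx2 : (n - 2 - m) ^ α < (n - 3) ^ α :=
      Real.rpow_lt_rpow (by linarith) (by linarith) (by linarith)
    have hx3 := mul_lt_mul_of_pos_left hx2 (by linarith : 0 < i - 1)
    linarith

/-! ### From an edge cut to a vertex cut -/

/-- A graph on `n ≥ k + 2` vertices with an edge cut of size at most `k` has two nonadjacent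
vertices on different sides of the cut; deleting an endpoint of each cut edge, other than these
two vertices, then separates the graph.  So `k` vertices can be coloured `0` so that the rest falls
into two nonempty classes without edges between them. -/
lemma exists_blk (G : SimpleGraph V) (k : ℕ) (hconn : G.Connected) (hk : k + 2 ≤ Fintype.card V)
    (hec : EdgeConnAtMost G k) :
    ∃ c : V → Fin 3, cnt c 0 = k ∧ 1 ≤ cnt c 1 ∧ 1 ≤ cnt c 2 ∧ G ≤ blk c := by
  classical
  obtain ⟨F, hF, hFk, hdis⟩ := hec
  have := hconn.nonempty
  obtain ⟨x, y, hxy⟩ : ∃ x y, ¬ (G.deleteEdges (↑F : Set (Sym2 V))).Reachable x y := by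
    by_contra! h
    exact hdis ⟨h⟩
  set H := G.deleteEdges (↑F : Set (Sym2 V)) with hH
  set A : Finset V := univ.filter (fun v => H.Reachable x v) with hA
  have hmA : ∀ v, v ∈ A ↔ H.Reachable x v := fun v => by simp [hA]
  have hcross : ∀ u v, u ∈ A → v ∉ A → G.Adj u v → s(u, v) ∈ F := by
    intro u v hu hv huv
    by_contra hn
    have hadj : H.Adj u v := by
      rw [hH, SimpleGraph.deleteEdges_adj]
      exact ⟨huv, by simpa using hn⟩
    exact hv ((hmA v).2 (((hmA u).1 hu).trans hadj.reachable))
  obtain ⟨x0, hx0, y0, hy0, hna⟩ : ∃ x0 ∈ A, ∃ y0 ∈ Aᶜ, ¬ G.Adj x0 y0 := by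
    by_contra! h
    have hinj : (A ×ˢ Aᶜ).card ≤ F.card := by
      apply Finset.card_le_card_of_injOn (fun p => s(p.1, p.2))
      · rintro ⟨p, q⟩ hpq
        simp only [coe_product, Set.mem_prod, mem_coe] at hpq
        exact hcross p q hpq.1 (mem_compl.1 hpq.2) (h p hpq.1 q hpq.2)
      · rintro ⟨p, q⟩ hpq ⟨p', q'⟩ hpq' he
        simp only [coe_product, Set.mem_prod, mem_coe, mem_compl] at hpq hpq'
        simp only [Sym2.eq_iff] at he
        rcases he with ⟨rfl, rfl⟩ | ⟨rfl, rfl⟩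
        · rfl
        · exact absurd hpq.1 hpq'.2
    rw [Finset.card_product] at hinj
    have hp : 1 ≤ A.card := Finset.card_pos.2 ⟨x, (hmA x).2 (SimpleGraph.Reachable.refl x)⟩
    have hq : 1 ≤ Aᶜ.card := Finset.card_pos.2 ⟨y, mem_compl.2 fun h => hxy ((hmA y).1 h)⟩
    have hpq := Finset.card_add_card_compl A
    obtain ⟨p, hp'⟩ := Nat.exists_eq_add_of_le hp
    obtain ⟨q, hq'⟩ := Nat.exists_eq_add_of_le hq
    rw [hp', hq'] at hinj hpq
    nlinarith [Nat.zero_le (p * q)]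
  have hne : x0 ≠ y0 := by rintro rfl; exact (mem_compl.1 hy0) hx0
  have hg : ∀ e ∈ F, ∃ w ∈ e, w ≠ x0 ∧ w ≠ y0 := by
    intro e he
    induction e using Sym2.ind with
    | _ u v =>
      have hadj : G.Adj u v := hF he
      by_contra! hcon
      have hu := hcon u (by simp)
      have hv := hcon v (by simp)
      by_cases h1 : u = x0
      · by_cases h2 : v = x0
        · exact hadj.ne (h1.trans h2.symm)
        · exact hna (h1 ▸ hv h2 ▸ hadj)
      · by_cases h2 : v = x0
        · exact hna (h2 ▸ hu h1 ▸ hadj.symm)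
        · exact hadj.ne ((hu h1).trans (hv h2).symm)
  choose! g hg1 hg2 using hg
  obtain ⟨K, hK1, hK2, hK3⟩ := Finset.exists_subsuperset_card_eq (s := F.image g)
    (t := univ \ {x0, y0}) (n := k)
    (by
      intro w hw
      obtain ⟨e, he, rfl⟩ := Finset.mem_image.1 hw
      simp [hg2 e he])
    (Finset.card_image_le.trans hFk)
    (by rw [Finset.card_sdiff_of_subset (subset_univ _), Finset.card_pair hne, Finset.card_univ]; omega)
  have hx0K : x0 ∉ K := fun h => by have := hK2 h; simp at this
  have hy0K : y0 ∉ K := fun h => by have := hK2 h; simp at this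
  refine ⟨fun v => if v ∈ K then 0 else if v ∈ A then 1 else 2, ?_, ?_, ?_, ?_⟩
  · rw [← hK3, cnt]
    congr 1
    ext v
    simp only [mem_filter, mem_univ, true_and]
    split_ifs <;> simp_all
  · exact Finset.card_pos.2 ⟨x0, by simp [hx0K, hx0]⟩
  · exact Finset.card_pos.2 ⟨y0, by simp [hy0K, mem_compl.1 hy0]⟩
  · have key : ∀ u v, G.Adj u v →
        ¬ ((if u ∈ K then (0 : Fin 3) else if u ∈ A then 1 else 2) = 1 ∧
          (if v ∈ K then (0 : Fin 3) else if v ∈ A then 1 else 2) = 2) := by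
      rintro u v huv ⟨h1, h2⟩
      have hu : u ∉ K ∧ u ∈ A := by split_ifs at h1 <;> simp_all
      have hv : v ∉ K ∧ v ∉ A := by split_ifs at h2 <;> simp_all
      have hF' := hcross u v hu.2 hv.2 huv
      have hgK : g s(u, v) ∈ K := hK1 (Finset.mem_image_of_mem g hF')
      rcases Sym2.mem_iff.1 (hg1 _ hF') with h | h
      · exact hu.1 (h ▸ hgK)
      · exact hv.1 (h ▸ hgK)
    intro u v huv
    exact ⟨huv.ne, key u v huv, fun h => key v u huv.symm ⟨h.2, h.1⟩⟩

/-! ### Isomorphism with the extremal graph -/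

/-- The colouring of the vertices of `Gik n k i` by its three blocks. -/
def col (n k i : ℕ) : Fin k ⊕ (Fin i ⊕ Fin (n - k - i)) → Fin 3
  | .inl _ => 0
  | .inr (.inl _) => 1
  | .inr (.inr _) => 2

lemma Gik_eq (n k i : ℕ) : Gik n k i = blk (col n k i) := by
  ext p q
  rcases p with p | p | p <;> rcases q with q | q | q <;>
    simp [Gik, join, blk, col, compat]

lemma cnt_col (n k i : ℕ) : cnt (col n k i) 0 = k ∧ cnt (col n k i) 1 = i ∧
    cnt (col n k i) 2 = n - k - i := by
  refine ⟨?_, ?_, ?_⟩ <;>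
  · rw [cnt, Finset.card_filter, Fintype.sum_sum_type, Fintype.sum_sum_type]
    simp [col]

lemma cnt_comp {W : Type*} [Fintype W] [DecidableEq W] (e : V ≃ W) (c : W → Fin 3) (a : Fin 3) :
    cnt (c ∘ e) a = cnt c a := by
  unfold cnt
  apply Finset.card_bij (fun v _ => e v)
  · intro v hv; simpa using hv
  · intro v _ w _ h; exact e.injective h
  · intro w hw; exact ⟨e.symm w, by simpa using hw, by simp⟩

lemma eq_blk_of_iso {W : Type*} [Fintype W] [DecidableEq W] (G : SimpleGraph V) (c : W → Fin 3)
    (e : G ≃g blk c) : G = blk (c ∘ e) := by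
  ext u v
  rw [← e.map_adj_iff]
  exact and_congr_left' (not_congr e.injective.eq_iff)

lemma iso_of_cnt {W : Type*} [Fintype W] [DecidableEq W] (c : V → Fin 3) (c' : W → Fin 3)
    (h : ∀ a, cnt c a = cnt c' a) : Nonempty (blk c ≃g blk c') := by
  have hcard : ∀ a, Nonempty ({v // c v = a} ≃ {w // c' w = a}) := by
    intro a
    rw [← Fintype.card_eq, Fintype.card_subtype, Fintype.card_subtype]
    exact h a
  let E : V ≃ W := Equiv.ofFiberEquiv fun a => (hcard a).some
  have hE : ∀ v, c' (E v) = c v := fun v => Equiv.ofFiberEquiv_map _ v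
  exact ⟨⟨E, by intro u v; simp [blk, hE]⟩⟩

/-- Exchanging the colours `1` and `2` does not change the graph. -/
lemma exists_swap (c : V → Fin 3) : ∃ c' : V → Fin 3, blk c' = blk c ∧ cnt c' 0 = cnt c 0 ∧
    cnt c' 1 = cnt c 2 ∧ cnt c' 2 = cnt c 1 := by
  have hs : ∀ a : Fin 3, (Equiv.swap 1 2 a = 0 ↔ a = 0) ∧ (Equiv.swap 1 2 a = 1 ↔ a = 2) ∧
      (Equiv.swap 1 2 a = 2 ↔ a = 1) := by decide
  refine ⟨fun v => Equiv.swap 1 2 (c v), ?_, ?_, ?_, ?_⟩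
  · ext u v
    simp only [blk, compat, hs]
    tauto
  all_goals simp only [cnt, hs]

theorem S_alpha_le_b_of_edgeConnAtMost (n k : ℕ) (hk : 1 ≤ k) (hkn : k ≤ n - 1)
    (hcard : Fintype.card V = n) (α : ℝ) (hα : 1 ≤ α)
    (G : SimpleGraph V) (hconn : G.Connected) (hec : EdgeConnAtMost G k) :
    S α G ≤ b α n k ∧
    (S α G = b α n k ↔ Nonempty (G ≃g Gik n k 1)) := by
  subst hcard
  have hcol := cnt_col (Fintype.card V) k 1
  have hiso : ∀ c : V → Fin 3, cnt c 0 = k → cnt c 1 = 1 →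
      Nonempty (blk c ≃g Gik (Fintype.card V) k 1) := by
    intro c h0 h1
    have hs := cnt_sum c
    rw [Gik_eq]
    apply iso_of_cnt
    intro a
    fin_cases a
    · exact h0.trans hcol.1.symm
    · exact h1.trans hcol.2.1.symm
    · refine Eq.trans ?_ hcol.2.2.symm
      change cnt c 2 = _
      omega
  have hback : Nonempty (G ≃g Gik (Fintype.card V) k 1) → S α G = b α (Fintype.card V) k := by
    rintro ⟨e⟩
    rw [Gik_eq] at e
    have h0 := (cnt_comp e.toEquiv _ 0).trans hcol.1
    have h1 := (cnt_comp e.toEquiv _ 1).trans hcol.2.1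
    have hG := eq_blk_of_iso G _ e
    have := S_blk_eq_b (col (Fintype.card V) k 1 ∘ e.toEquiv) α hα (by omega) h1
    rw [h0] at this
    rw [hG]
    exact this
  suffices hmain : S α G ≤ b α (Fintype.card V) k ∧ (S α G = b α (Fintype.card V) k →
      ∃ c : V → Fin 3, cnt c 0 = k ∧ cnt c 1 = 1 ∧ G = blk c) by
    refine ⟨hmain.1, fun h => ?_, hback⟩
    obtain ⟨c, h0, h1, rfl⟩ := hmain.2 h
    exact hiso c h0 h1
  rcases Nat.lt_or_ge (k + 1) (Fintype.card V) with hlt | hge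
  · obtain ⟨c, h0, h1, h2, hle⟩ := exists_blk G k hconn hlt hec
    obtain ⟨m1, m2⟩ := S_mono α hα hle
    obtain ⟨b1, b2⟩ := S_blk_le_b c α hα (by omega) h1 h2
    rw [h0] at b1 b2
    refine ⟨m1.trans b1, fun heq => ?_⟩
    have hGc := m2 (le_antisymm m1 (heq ▸ b1))
    rcases b2 (hGc ▸ heq) with h | h
    · exact ⟨c, h0, h, hGc⟩
    · obtain ⟨c', e, e0, e1, -⟩ := exists_swap c
      exact ⟨c', e0.trans h0, e1.trans h, hGc.trans e.symm⟩
  · -- here `n = k + 1`, no vertex has colour `2`, and the extremal graph is complete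
    have hn : Fintype.card V = k + 1 := by omega
    obtain ⟨K, -, hK⟩ := Finset.exists_subset_card_eq (s := (univ : Finset V)) (n := k)
      (by rw [Finset.card_univ]; omega)
    let c : V → Fin 3 := fun v => if v ∈ K then 0 else 1
    have h0 : cnt c 0 = k := by
      rw [← hK, cnt]; congr 1; ext v; simp [c]
    have h2 : cnt c 2 = 0 := by
      rw [cnt, Finset.card_eq_zero, Finset.filter_eq_empty_iff]
      intro v _
      simp only [c]; split_ifs <;> simp
    have h1 : cnt c 1 = 1 := by have := cnt_sum c; omega
    have hle : G ≤ blk c := by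
      intro u v huv
      refine ⟨huv.ne, ?_⟩
      simp only [c, compat]; split_ifs <;> simp
    obtain ⟨m1, m2⟩ := S_mono α hα hle
    have hb := S_blk_eq_b c α hα (by omega) h1
    rw [h0] at hb
    exact ⟨hb ▸ m1, fun heq => ⟨c, h0, h1, m2 (heq.trans hb.symm)⟩⟩

end SLP
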